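/- Let A, D be disjoint measurable subsets of a cube Q ⊂ ℝⁿ with min{|A|,|D|} ≥ σ|Q| for some σ > 0, let B = Q∖(A∪D), and let s = 1/2. Then L(A,D) := ∫_A ∫_D |x−y|^{−(n+1)} dx dy ≥ δ |Q|^{(n−1)/n} log(|Q|/|B|), where δ > 0 depends only on σ and n. -/

import Mathlib

open MeasureTheory Set ENNReal

/-!
The proof is a multiscale argument based on a scaling inequality for near pairs. Write
`p S T r` for the measure of the set of pairs `(x, y) ∈ S × T` with `‖x - y‖ < r`.

If `S ∪ T` contains the midpoint of each pair in `S × T`, then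
`p S T (2 * r) ≤ 2 ^ (n + 1) * p S T r` (`volume_nearPairs_two_mul_le`): the midpoint falls in `S`
or in `T` and so yields a pair at half the distance. Apply this to `S = A`, `T = Q \ A = D ∪ B`,
starting from a scale `R` comparable to the side `h` of the cube and exceeding its diameter. It shows that at every scale `r = R / 2 ^ k`
the quantity `r ^ (-(n + 1)) * p A (D ∪ B) r` is at least `R ^ (-(n + 1)) * |A| * |D|`, which is at
least `c₁ * h ^ (n - 1)`. The pairs ending in `B` contribute at most a constant times `|B| / r` to
it, so the rest comes from `A × D`.

The kernel dominates, up to a constant, the sum of `r ^ (-(n + 1)) * 1_{‖x - y‖ < r}` over the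
dyadic scales (`sum_dyadic_le`). Summing over `K` scales (`multiscale_le`) gives
`K * c₁ * h ^ (n - 1) ≤ C * L(A, D) + C' * 2 ^ K * |B| / h`. Taking `2 ^ K ≈ |Q| / |B|`
makes the error term `O(h ^ (n - 1))`, which is absorbed by the trivial bound
`c₁ * h ^ (n - 1) ≤ L(A, D)` (`volume_mul_le`, `log_le_of_multiscale`).
-/

/-! ### Near pairs across scales -/

/-- The set of pairs `(x, y) ∈ S × T` with `‖x - y‖ < r`. -/
def nearPairs {E : Type*} [NormedAddCommGroup E] (S T : Set E) (r : ℝ) : Set (E × E) :=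
  {z | z.1 ∈ S ∧ z.2 ∈ T ∧ ‖z.1 - z.2‖ < r}

theorem measurableSet_nearPairs {n : ℕ} {S T : Set (EuclideanSpace ℝ (Fin n))}
    (hS : MeasurableSet S) (hT : MeasurableSet T) (r : ℝ) :
    MeasurableSet (nearPairs S T r) := by
  have h : nearPairs S T r = (S ×ˢ T) ∩ {z | ‖z.1 - z.2‖ < r} := by
    ext z; simp [nearPairs, and_assoc]
  rw [h]
  exact (hS.prod hT).inter
    (measurableSet_lt (measurable_fst.sub measurable_snd).norm measurable_const)

theorem volume_preimage_midpoint {n : ℕ} (c : EuclideanSpace ℝ (Fin n))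
    (S : Set (EuclideanSpace ℝ (Fin n))) :
    volume ((fun y => (2⁻¹ : ℝ) • (c + y)) ⁻¹' S) = 2 ^ n * volume S := by
  have h : (fun y : EuclideanSpace ℝ (Fin n) => (2⁻¹ : ℝ) • (c + y)) ⁻¹' S
      = (fun y => c + y) ⁻¹' (((2⁻¹ : ℝ) • ·) ⁻¹' S) := rfl
  rw [h, measure_preimage_add, Measure.addHaar_preimage_smul _ (by norm_num)]
  congr 1
  rw [finrank_euclideanSpace_fin, abs_of_pos (by positivity), inv_pow, inv_inv,
    ENNReal.ofReal_pow (by norm_num)]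
  norm_num

/-- Doubling the distance multiplies the measure of the near pairs by at most `2 ^ (n + 1)`.
The midpoint `m` of a near pair `(x, y)` lies in `S` or in `T`, so one of `(m, y)`, `(x, m)` is a
near pair at half the distance, and each of these two substitutions has Jacobian `2 ^ (-n)`. -/
theorem volume_nearPairs_two_mul_le {n : ℕ} {S T : Set (EuclideanSpace ℝ (Fin n))}
    (hS : MeasurableSet S) (hT : MeasurableSet T)
    (hST : ∀ x ∈ S, ∀ y ∈ T, (2⁻¹ : ℝ) • (x + y) ∈ S ∪ T) (r : ℝ) :
    volume (nearPairs S T (2 * r)) ≤ 2 ^ (n + 1) * volume (nearPairs S T r) := by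
  have hP := measurableSet_nearPairs hS hT r
  let f : EuclideanSpace ℝ (Fin n) × EuclideanSpace ℝ (Fin n) → _ :=
    fun z => ((2⁻¹ : ℝ) • (z.2 + z.1), z.2)
  let g : EuclideanSpace ℝ (Fin n) × EuclideanSpace ℝ (Fin n) → _ :=
    fun z => (z.1, (2⁻¹ : ℝ) • (z.1 + z.2))
  have hf : Measurable f := by fun_prop
  have hg : Measurable g := by fun_prop
  have hsub : nearPairs S T (2 * r) ⊆ f ⁻¹' nearPairs S T r ∪ g ⁻¹' nearPairs S T r := by
    rintro ⟨x, y⟩ ⟨hx, hy, hxy⟩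
    simp only at hx hy hxy
    have hhalf : 2⁻¹ * ‖x - y‖ < r := by linarith
    have hn : ‖(2⁻¹ : ℝ)‖ = 2⁻¹ := by norm_num
    rcases hST x hx y hy with hm | hm
    · refine Or.inl ⟨by simpa [f, add_comm] using hm, hy, ?_⟩
      have : (2⁻¹ : ℝ) • (y + x) - y = (2⁻¹ : ℝ) • (x - y) := by module
      simpa only [f, this, norm_smul, hn] using hhalf
    · refine Or.inr ⟨hx, hm, ?_⟩
      have : x - (2⁻¹ : ℝ) • (x + y) = (2⁻¹ : ℝ) • (x - y) := by module
      simpa only [g, this, norm_smul, hn] using hhalf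
  have hvf : volume (f ⁻¹' nearPairs S T r) = 2 ^ n * volume (nearPairs S T r) := by
    rw [Measure.volume_eq_prod, Measure.prod_apply_symm (hf hP), Measure.prod_apply_symm hP,
      ← lintegral_const_mul _ (measurable_measure_prodMk_right hP)]
    refine lintegral_congr fun y => ?_
    exact volume_preimage_midpoint y ((fun x => (x, y)) ⁻¹' nearPairs S T r)
  have hvg : volume (g ⁻¹' nearPairs S T r) = 2 ^ n * volume (nearPairs S T r) := by
    rw [Measure.volume_eq_prod, Measure.prod_apply (hg hP), Measure.prod_apply hP,
      ← lintegral_const_mul _ (measurable_measure_prodMk_left hP)]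
    refine lintegral_congr fun x => ?_
    exact volume_preimage_midpoint x (Prod.mk x ⁻¹' nearPairs S T r)
  calc volume (nearPairs S T (2 * r))
      ≤ volume (f ⁻¹' nearPairs S T r) + volume (g ⁻¹' nearPairs S T r) :=
        (measure_mono hsub).trans (measure_union_le _ _)
    _ = 2 ^ (n + 1) * volume (nearPairs S T r) := by rw [hvf, hvg]; ring

theorem volume_nearPairs_le {n : ℕ} {S T : Set (EuclideanSpace ℝ (Fin n))}
    (hS : MeasurableSet S) (hT : MeasurableSet T)
    (hST : ∀ x ∈ S, ∀ y ∈ T, (2⁻¹ : ℝ) • (x + y) ∈ S ∪ T) (R : ℝ) (k : ℕ) :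
    volume (nearPairs S T R) ≤ (2 ^ (n + 1)) ^ k * volume (nearPairs S T (R / 2 ^ k)) := by
  induction k with
  | zero => simp
  | succ k ih =>
    refine ih.trans ?_
    have h := volume_nearPairs_two_mul_le hS hT hST (R / 2 ^ (k + 1))
    have e : 2 * (R / 2 ^ (k + 1)) = R / 2 ^ k := by rw [pow_succ]; field_simp
    rw [e] at h
    calc _ ≤ (2 ^ (n + 1)) ^ k * (2 ^ (n + 1) * volume (nearPairs S T (R / 2 ^ (k + 1)))) := by
          gcongr
      _ = _ := by ring

theorem volume_nearPairs_le_ball {n : ℕ} [NeZero n] {S T : Set (EuclideanSpace ℝ (Fin n))}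
    (hS : MeasurableSet S) (hT : MeasurableSet T) {r : ℝ} (hr : 0 ≤ r) :
    volume (nearPairs S T r) ≤ volume T *
      (ENNReal.ofReal (r ^ n) * volume (Metric.ball (0 : EuclideanSpace ℝ (Fin n)) 1)) := by
  rw [Measure.volume_eq_prod, Measure.prod_apply_symm (measurableSet_nearPairs hS hT r),
    mul_comm, ← setLIntegral_const, ← lintegral_indicator hT]
  refine lintegral_mono fun y => ?_
  by_cases hy : y ∈ T
  · rw [indicator_of_mem hy]
    have := Measure.addHaar_ball (volume : Measure (EuclideanSpace ℝ (Fin n))) y hr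
    rw [finrank_euclideanSpace_fin] at this
    rw [← this]
    refine measure_mono fun x hx => ?_
    rw [mem_ball_iff_norm]
    exact hx.2.2
  · rw [indicator_of_notMem hy]
    have : (fun x => (x, y)) ⁻¹' nearPairs S T r = ∅ := by
      ext x; simp [nearPairs, hy]
    rw [this, measure_empty]

/-! ### Dyadic decomposition of the kernel -/

/-- A truncated dyadic decomposition of the kernel `t ^ (-(n + 1))`: the sum is geometric with
ratio `2 ^ (n + 1)`, hence dominated by a multiple of its last nonvanishing term. -/
theorem sum_dyadic_le {n : ℕ} {R t : ℝ} (hR : 0 < R) (ht : 0 < t) (K : ℕ) :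
    ∑ k ∈ Finset.range K, (if t < R / 2 ^ k then ((R / 2 ^ k) ^ (n + 1))⁻¹ else 0)
      ≤ 2 ^ (n + 1) * (t ^ (n + 1))⁻¹ := by
  have hw : ∀ k : ℕ, ((R / 2 ^ (k + 1)) ^ (n + 1))⁻¹
      = 2 ^ (n + 1) * ((R / 2 ^ k) ^ (n + 1))⁻¹ := by
    intro k
    rw [show R / 2 ^ (k + 1) = R / 2 ^ k / 2 by rw [pow_succ]; field_simp, div_pow _ 2, inv_div,
      div_eq_mul_inv]
  have h2 : (2 : ℝ) ≤ 2 ^ (n + 1) := by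
    rw [pow_succ]; linarith [one_le_pow₀ (M₀ := ℝ) (n := n) one_le_two]
  have hgeo : ∀ K : ℕ,
      ∑ k ∈ Finset.range K, (if t < R / 2 ^ k then ((R / 2 ^ k) ^ (n + 1))⁻¹ else 0)
        ≤ ((R / 2 ^ K) ^ (n + 1))⁻¹ := by
    intro K
    induction K with
    | zero => simp; positivity
    | succ K ih =>
      have hpos : 0 < ((R / 2 ^ K) ^ (n + 1))⁻¹ := by positivity
      rw [Finset.sum_range_succ, hw]
      have : (if t < R / 2 ^ K then ((R / 2 ^ K) ^ (n + 1))⁻¹ else 0)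
          ≤ ((R / 2 ^ K) ^ (n + 1))⁻¹ := by
        split_ifs
        exacts [le_rfl, hpos.le]
      nlinarith
  induction K with
  | zero => simp; positivity
  | succ K ih =>
    by_cases h : t < R / 2 ^ K
    · refine (hgeo (K + 1)).trans ?_
      rw [hw]
      gcongr
    · rw [Finset.sum_range_succ, if_neg h, add_zero]
      exact ih

/-- The kernel `‖x - y‖ ^ (-(n + 1))`; its value on the diagonal is the junk value `0`, harmless
because it is only used for `x`, `y` in disjoint sets. -/
noncomputable def kern {n : ℕ} (x y : EuclideanSpace ℝ (Fin n)) : ℝ≥0∞ :=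
  ENNReal.ofReal (‖x - y‖ ^ (-((n : ℝ) + 1)))

theorem kern_eq {n : ℕ} (x y : EuclideanSpace ℝ (Fin n)) :
    kern x y = ENNReal.ofReal ((‖x - y‖ ^ (n + 1))⁻¹) := by
  rw [kern, Real.rpow_neg (norm_nonneg _), ← Nat.cast_add_one, Real.rpow_natCast]

theorem lintegral_kern_eq {n : ℕ} (A D : Set (EuclideanSpace ℝ (Fin n))) :
    ∫⁻ x in A, ∫⁻ y in D, kern x y = ∫⁻ z in A ×ˢ D, kern z.1 z.2 := by
  rw [Measure.volume_eq_prod, ← Measure.prod_restrict, lintegral_prod]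
  unfold kern
  fun_prop

/-- The interaction dominates the weighted sum over dyadic scales of the measures of near pairs. -/
theorem sum_nearPairs_le {n : ℕ} {A D : Set (EuclideanSpace ℝ (Fin n))}
    (hA : MeasurableSet A) (hD : MeasurableSet D) (hAD : Disjoint A D) {R : ℝ} (hR : 0 < R)
    (K : ℕ) :
    ∑ k ∈ Finset.range K, ENNReal.ofReal ((R / 2 ^ k) ^ (n + 1))⁻¹ *
        volume (nearPairs A D (R / 2 ^ k))
      ≤ 2 ^ (n + 1) * ∫⁻ x in A, ∫⁻ y in D, kern x y := by
  have hm : ∀ r : ℝ, MeasurableSet {z : EuclideanSpace ℝ (Fin n) × EuclideanSpace ℝ (Fin n) |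
      ‖z.1 - z.2‖ < r} := fun r =>
    measurableSet_lt (measurable_fst.sub measurable_snd).norm measurable_const
  have hterm : ∀ k : ℕ, ENNReal.ofReal ((R / 2 ^ k) ^ (n + 1))⁻¹ *
        volume (nearPairs A D (R / 2 ^ k))
      = ∫⁻ z in A ×ˢ D, {z | ‖z.1 - z.2‖ < R / 2 ^ k}.indicator
          (fun _ => ENNReal.ofReal ((R / 2 ^ k) ^ (n + 1))⁻¹) z := by
    intro k
    rw [lintegral_indicator_const (hm _), Measure.restrict_apply (hm _)]
    congr 2
    ext z; simp [nearPairs]; tauto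
  simp_rw [hterm]
  rw [← lintegral_finsetSum _ fun k _ => measurable_const.indicator (hm _), lintegral_kern_eq,
    ← lintegral_const_mul _ (by unfold kern; fun_prop)]
  refine setLIntegral_mono' (hA.prod hD) fun z hz => ?_
  have ht : 0 < ‖z.1 - z.2‖ := by
    rw [norm_pos_iff, sub_ne_zero]
    exact fun h => disjoint_left.1 hAD hz.1 (h ▸ hz.2)
  have h := ENNReal.ofReal_le_ofReal (sum_dyadic_le (n := n) hR ht K)
  rw [ENNReal.ofReal_sum_of_nonneg (fun k _ => by split_ifs <;> positivity),
    ENNReal.ofReal_mul (by positivity), ← kern_eq, ENNReal.ofReal_pow (by norm_num),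
    ENNReal.ofReal_ofNat] at h
  refine le_trans (Finset.sum_le_sum fun k _ => ?_) h
  by_cases hk : ‖z.1 - z.2‖ < R / 2 ^ k <;> simp [indicator, hk]

/-! ### The multiscale lower bound -/

/-- The multiscale lower bound: each of `K` dyadic scales contributes at least the contribution of
the largest one, up to an error caused by the exceptional set `B`. -/
theorem multiscale_le {n : ℕ} [NeZero n] {A D B : Set (EuclideanSpace ℝ (Fin n))}
    (hA : MeasurableSet A) (hD : MeasurableSet D) (hB : MeasurableSet B) (hAD : Disjoint A D)
    (hmid : ∀ x ∈ A, ∀ y ∈ D ∪ B, (2⁻¹ : ℝ) • (x + y) ∈ A ∪ (D ∪ B))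
    {R : ℝ} (hR : 0 < R) (hdiam : ∀ x ∈ A, ∀ y ∈ D, ‖x - y‖ < R) (K : ℕ) :
    K * (ENNReal.ofReal (R ^ (n + 1))⁻¹ * (volume A * volume D))
      ≤ 2 ^ (n + 1) * (∫⁻ x in A, ∫⁻ y in D, kern x y) +
        ENNReal.ofReal (2 ^ K / R) *
          (volume B * volume (Metric.ball (0 : EuclideanSpace ℝ (Fin n)) 1)) := by
  set ω := volume (Metric.ball (0 : EuclideanSpace ℝ (Fin n)) 1)
  have hk : ∀ k : ℕ, ENNReal.ofReal (R ^ (n + 1))⁻¹ * (volume A * volume D)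
      ≤ ENNReal.ofReal ((R / 2 ^ k) ^ (n + 1))⁻¹ * volume (nearPairs A D (R / 2 ^ k))
        + ENNReal.ofReal (2 ^ k / R) * (volume B * ω) := by
    intro k
    have h1 : volume A * volume D ≤ volume (nearPairs A (D ∪ B) R) := by
      rw [Measure.volume_eq_prod, ← Measure.prod_prod]
      exact measure_mono fun z hz => ⟨hz.1, Or.inl hz.2, hdiam _ hz.1 _ hz.2⟩
    have h2 := volume_nearPairs_le hA (hD.union hB) hmid R k
    have h3 : volume (nearPairs A (D ∪ B) (R / 2 ^ k)) ≤ volume (nearPairs A D (R / 2 ^ k)) +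
        volume B * (ENNReal.ofReal ((R / 2 ^ k) ^ n) * ω) := by
      refine le_trans ((measure_mono ?_).trans (measure_union_le (nearPairs A D (R / 2 ^ k))
        (nearPairs A B (R / 2 ^ k)))) (add_le_add le_rfl
          (volume_nearPairs_le_ball hA hB (by positivity)))
      rintro z ⟨hz, hz' | hz', hlt⟩
      exacts [Or.inl ⟨hz, hz', hlt⟩, Or.inr ⟨hz, hz', hlt⟩]
    have hw : ENNReal.ofReal (R ^ (n + 1))⁻¹ * (2 ^ (n + 1)) ^ k
        = ENNReal.ofReal ((R / 2 ^ k) ^ (n + 1))⁻¹ := by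
      rw [show ((2 : ℝ≥0∞) ^ (n + 1)) ^ k = ENNReal.ofReal ((2 ^ (n + 1)) ^ k) by
        rw [ENNReal.ofReal_pow (by positivity), ENNReal.ofReal_pow (by norm_num),
          ENNReal.ofReal_ofNat], ← ENNReal.ofReal_mul (by positivity)]
      congr 1
      rw [div_pow, inv_div, ← pow_mul, ← pow_mul, mul_comm k, div_eq_inv_mul]
    have hw' : ENNReal.ofReal ((R / 2 ^ k) ^ (n + 1))⁻¹ * ENNReal.ofReal ((R / 2 ^ k) ^ n)
        = ENNReal.ofReal (2 ^ k / R) := by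
      rw [← ENNReal.ofReal_mul (by positivity)]
      congr 1
      rw [pow_succ]
      field_simp
    calc ENNReal.ofReal (R ^ (n + 1))⁻¹ * (volume A * volume D)
        ≤ ENNReal.ofReal (R ^ (n + 1))⁻¹ * ((2 ^ (n + 1)) ^ k *
            (volume (nearPairs A D (R / 2 ^ k)) +
              volume B * (ENNReal.ofReal ((R / 2 ^ k) ^ n) * ω))) := by
          refine mul_le_mul' le_rfl (h1.trans (h2.trans ?_))
          gcongr
      _ = _ := by
          rw [← mul_assoc, hw, mul_add, ← hw']
          ring
  have hsum : (K : ℝ≥0∞) * (ENNReal.ofReal (R ^ (n + 1))⁻¹ * (volume A * volume D))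
      ≤ ∑ k ∈ Finset.range K, (ENNReal.ofReal ((R / 2 ^ k) ^ (n + 1))⁻¹ *
          volume (nearPairs A D (R / 2 ^ k)) + ENNReal.ofReal (2 ^ k / R) * (volume B * ω)) := by
    simpa only [Finset.sum_const, Finset.card_range, nsmul_eq_mul] using
      Finset.sum_le_sum fun k (_ : k ∈ Finset.range K) => hk k
  refine hsum.trans ?_
  rw [Finset.sum_add_distrib, ← Finset.sum_mul]
  gcongr
  · exact sum_nearPairs_le hA hD hAD hR K
  · rw [← ENNReal.ofReal_sum_of_nonneg (fun k _ => by positivity)]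
    refine ENNReal.ofReal_le_ofReal ?_
    rw [← Finset.sum_div]
    gcongr
    rw [geom_sum_eq (by norm_num)]
    norm_num

/-- The trivial bound from a lower bound on the kernel over `A × D`. -/
theorem volume_mul_le {n : ℕ} {A D : Set (EuclideanSpace ℝ (Fin n))}
    (hA : MeasurableSet A) (hD : MeasurableSet D) (hAD : Disjoint A D)
    {R : ℝ} (hdiam : ∀ x ∈ A, ∀ y ∈ D, ‖x - y‖ < R) :
    ENNReal.ofReal (R ^ (n + 1))⁻¹ * (volume A * volume D)
      ≤ ∫⁻ x in A, ∫⁻ y in D, kern x y := by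
  rw [lintegral_kern_eq, ← Measure.prod_prod, ← Measure.volume_eq_prod, ← setLIntegral_const]
  refine setLIntegral_mono' (hA.prod hD) fun z hz => ?_
  have ht : 0 < ‖z.1 - z.2‖ := by
    rw [norm_pos_iff, sub_ne_zero]
    exact fun h => disjoint_left.1 hAD hz.1 (h ▸ hz.2)
  rw [kern_eq]
  have := (hdiam _ hz.1 _ hz.2).le
  gcongr

/-! ### Geometry of the cube -/

theorem volume_cube {n : ℕ} (a : EuclideanSpace ℝ (Fin n)) {h : ℝ} (hh : 0 < h) :
    MeasurableSet {x : EuclideanSpace ℝ (Fin n) | ∀ i, x i ∈ Set.Icc (a i) (a i + h)} ∧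
    volume {x : EuclideanSpace ℝ (Fin n) | ∀ i, x i ∈ Set.Icc (a i) (a i + h)}
      = ENNReal.ofReal (h ^ n) := by
  have e : {x : EuclideanSpace ℝ (Fin n) | ∀ i, x i ∈ Set.Icc (a i) (a i + h)}
      = (@WithLp.ofLp 2 (Fin n → ℝ)) ⁻¹' (Set.Icc a.ofLp (fun i => a i + h)) := by
    ext x
    simp [Pi.le_def, forall_and]
  have hp := PiLp.volume_preserving_ofLp (Fin n)
  rw [e]
  refine ⟨hp.measurable measurableSet_Icc, ?_⟩
  rw [hp.measure_preimage measurableSet_Icc.nullMeasurableSet, Real.volume_Icc_pi]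
  simp [ENNReal.ofReal_pow hh.le]

theorem norm_sub_lt_of_mem_cube {n : ℕ} [NeZero n] {a x y : EuclideanSpace ℝ (Fin n)} {h : ℝ}
    (hh : 0 < h)
    (hx : ∀ i, x i ∈ Set.Icc (a i) (a i + h)) (hy : ∀ i, y i ∈ Set.Icc (a i) (a i + h)) :
    ‖x - y‖ < 2 * n * h := by
  have hn : (1 : ℝ) ≤ n := by exact_mod_cast NeZero.one_le
  have : ‖x - y‖ ≤ n * h := by
    refine abs_le_of_sq_le_sq' ?_ (by positivity) |>.2
    rw [EuclideanSpace.norm_sq_eq]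
    calc ∑ i, ‖(x - y) i‖ ^ 2 ≤ ∑ _i : Fin n, h ^ 2 := by
          refine Finset.sum_le_sum fun i _ => ?_
          rw [Real.norm_eq_abs, sq_abs, PiLp.sub_apply]
          refine sq_le_sq' ?_ ?_ <;> linarith [(hx i).1, (hx i).2, (hy i).1, (hy i).2]
      _ = n * h ^ 2 := by simp
      _ ≤ (n * h) ^ 2 := by nlinarith [mul_nonneg (sub_nonneg.2 hn) (sq_nonneg h)]
  nlinarith [mul_pos (zero_lt_one.trans_le hn) hh]

/-! ### Conclusion -/

/-- The choice of the number of scales: `K ≈ log₂ (1 / β)`, the last scale at which the error term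
is still bounded. -/
theorem log_le_of_multiscale {c₁ c₂ M H l β : ℝ} (hc₁ : 0 < c₁) (hc₂ : 0 ≤ c₂) (hM : 0 < M)
    (hH : 0 < H) (hβ : 0 < β) (hβ1 : β ≤ 1) (hbase : c₁ * H ≤ l)
    (hmulti : ∀ K : ℕ, K * (c₁ * H) ≤ M * l + 2 ^ K * (c₂ * β * H)) :
    c₁ / (M + c₂ / c₁ + 1) * H * Real.log (1 / β) ≤ l := by
  obtain ⟨K, hK, hK'⟩ := exists_nat_pow_near ((one_le_div hβ).2 hβ1) (one_lt_two (α := ℝ))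
  have hlog : Real.log (1 / β) ≤ K + 1 := by
    calc Real.log (1 / β) ≤ Real.log (2 ^ (K + 1)) := Real.log_le_log (by positivity) hK'.le
      _ = (K + 1) * Real.log 2 := by rw [Real.log_pow]; push_cast; ring
      _ ≤ (K + 1) * 1 := by gcongr; linarith [Real.log_two_lt_d9]
      _ = K + 1 := mul_one _
  have herr : 2 ^ K * (c₂ * β * H) ≤ c₂ / c₁ * l := by
    have h1 : 2 ^ K * β ≤ 1 := (le_div_iff₀ hβ).1 hK
    calc 2 ^ K * (c₂ * β * H) = (2 ^ K * β) * (c₂ * H) := by ring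
      _ ≤ 1 * (c₂ * H) := by gcongr
      _ = c₂ / c₁ * (c₁ * H) := by field_simp
      _ ≤ c₂ / c₁ * l := by gcongr
  have hden : 0 < M + c₂ / c₁ + 1 := by positivity
  rw [div_mul_eq_mul_div, div_mul_eq_mul_div, div_le_iff₀ hden]
  calc c₁ * H * Real.log (1 / β) ≤ c₁ * H * (K + 1) := by gcongr
    _ = K * (c₁ * H) + c₁ * H := by ring
    _ ≤ l * (M + c₂ / c₁ + 1) := by linarith [hmulti K]

/-- Lower bound for the `s = 1/2` interaction of two subsets of a cube, each of
measure at least `σ|Q|`: `L(A,D) ≥ δ |Q|^{(n-1)/n} log(|Q|/|B|)` with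
`δ = δ(σ,n)`, where `B = Q ∖ (A ∪ D)`. -/
theorem stmt17 (n : ℕ) (hn : 2 ≤ n) (σ : ℝ) (hσ : σ ∈ Set.Ioo (0:ℝ) (1/2)) :
    ∃ δ : ℝ, 0 < δ ∧
      ∀ (a : EuclideanSpace ℝ (Fin n)) (h : ℝ), 0 < h →
        ∀ Q A D B : Set (EuclideanSpace ℝ (Fin n)),
          Q = {x : EuclideanSpace ℝ (Fin n) | ∀ i, x i ∈ Set.Icc (a i) (a i + h)} →
          MeasurableSet A → MeasurableSet D →
          A ⊆ Q → D ⊆ Q → Disjoint A D →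
          B = Q \ (A ∪ D) →
          ENNReal.ofReal σ * volume Q ≤ volume A →
          ENNReal.ofReal σ * volume Q ≤ volume D →
          0 < volume B →
          ENNReal.ofReal
              (δ * (volume Q).toReal ^ (((n : ℝ) - 1) / n) *
                Real.log ((volume Q).toReal / (volume B).toReal))
            ≤ ∫⁻ x in A, ∫⁻ y in D,
                ENNReal.ofReal (‖x - y‖ ^ (-((n : ℝ) + 1))) := by
  obtain ⟨m, rfl⟩ : ∃ m, n = m + 1 := ⟨n - 1, by omega⟩
  obtain ⟨hσ0, -⟩ := hσ
  set ω := (volume (Metric.ball (0 : EuclideanSpace ℝ (Fin (m + 1))) 1)).toReal with hω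
  have hω_top : volume (Metric.ball (0 : EuclideanSpace ℝ (Fin (m + 1))) 1) ≠ ⊤ :=
    measure_ball_lt_top.ne
  have hω0 : 0 ≤ ω := ENNReal.toReal_nonneg
  obtain ⟨ν, hν⟩ : ∃ ν : ℝ, ν = 2 * ((m + 1 : ℕ) : ℝ) := ⟨_, rfl⟩
  have hν0 : 0 < ν := by rw [hν]; positivity
  obtain ⟨c₁, hc₁⟩ : ∃ c₁ : ℝ, c₁ = σ ^ 2 / ν ^ (m + 2) := ⟨_, rfl⟩
  have hc₁0 : 0 < c₁ := by rw [hc₁]; positivity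
  have hc₂0 : 0 ≤ ω / ν := by positivity
  refine ⟨c₁ / (2 ^ (m + 2) + ω / ν / c₁ + 1), by positivity, ?_⟩
  intro a h hh Q A D B hQ hA hD hAQ hDQ hAD hB hσA hσD hBpos
  obtain ⟨hQm, hQv⟩ := volume_cube a hh
  rw [← hQ] at hQm hQv
  have hBm : MeasurableSet B := hB ▸ hQm.diff (hA.union hD)
  have hBQ : B ⊆ Q := hB ▸ sdiff_subset
  have hcover : A ∪ (D ∪ B) = Q := by
    rw [hB, ← union_assoc, union_sdiff_self, union_eq_right.2 (union_subset hAQ hDQ)]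
  have hdiam : ∀ x ∈ A, ∀ y ∈ D, ‖x - y‖ < ν * h := fun x hx y hy => by
    have hx' := hAQ hx
    have hy' := hDQ hy
    rw [hQ] at hx' hy'
    rw [hν]
    exact norm_sub_lt_of_mem_cube hh hx' hy'
  have hmid : ∀ x ∈ A, ∀ y ∈ D ∪ B, (2⁻¹ : ℝ) • (x + y) ∈ A ∪ (D ∪ B) := by
    intro x hx y hy
    have hx' := hAQ hx
    have hy' := union_subset hDQ hBQ hy
    rw [hcover]
    rw [hQ] at hx' hy' ⊢
    intro i
    have h1 := hx' i
    have h2 := hy' i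
    simp only [PiLp.smul_apply, PiLp.add_apply, smul_eq_mul]
    constructor <;> linarith [h1.1, h1.2, h2.1, h2.2]
  have hR : 0 < ν * h := by positivity
  have hmulti := multiscale_le hA hD hBm hAD hmid hR hdiam
  have hbase := volume_mul_le hA hD hAD hdiam
  change _ ≤ ∫⁻ x in A, ∫⁻ y in D, kern x y
  set L := ∫⁻ x in A, ∫⁻ y in D, kern x y
  by_cases hL : L = ⊤
  · rw [hL]; exact le_top
  refine (ENNReal.ofReal_le_iff_le_toReal hL).2 ?_
  have hB_top : volume B ≠ ⊤ :=
    ne_top_of_le_ne_top (by rw [hQv]; exact ENNReal.ofReal_ne_top) (measure_mono hBQ)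
  -- In real numbers the mass of the largest scale is `c₁ * h ^ m`.
  have hmass : ENNReal.ofReal (c₁ * h ^ m)
      ≤ ENNReal.ofReal ((ν * h) ^ (m + 1 + 1))⁻¹ * (volume A * volume D) := by
    calc ENNReal.ofReal (c₁ * h ^ m)
        = ENNReal.ofReal ((ν * h) ^ (m + 1 + 1))⁻¹ *
            ((ENNReal.ofReal σ * volume Q) * (ENNReal.ofReal σ * volume Q)) := by
          rw [hQv, ← ENNReal.ofReal_mul hσ0.le, ← ENNReal.ofReal_mul (by positivity),
            ← ENNReal.ofReal_mul (by positivity), hc₁]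
          congr 1
          rw [mul_pow]
          field_simp
          ring
      _ ≤ _ := by gcongr
  have hbase' : c₁ * h ^ m ≤ L.toReal :=
    (ENNReal.ofReal_le_iff_le_toReal hL).1 (hmass.trans hbase)
  have hQr : (volume Q).toReal = h ^ (m + 1) := by
    rw [hQv, ENNReal.toReal_ofReal (by positivity)]
  obtain ⟨b, hb⟩ : ∃ b, b = (volume B).toReal := ⟨_, rfl⟩
  have hb0 : 0 < b := hb ▸ ENNReal.toReal_pos hBpos.ne' hB_top
  have hbQ : b ≤ h ^ (m + 1) := by
    rw [hb, ← hQr]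
    exact ENNReal.toReal_mono (by rw [hQv]; exact ENNReal.ofReal_ne_top) (measure_mono hBQ)
  have hmulti' : ∀ K : ℕ, K * (c₁ * h ^ m)
      ≤ 2 ^ (m + 2) * L.toReal + 2 ^ K * (ω / ν * (b / h ^ (m + 1)) * h ^ m) := by
    intro K
    have h1 : (K : ℝ≥0∞) * ENNReal.ofReal (c₁ * h ^ m) ≤ _ :=
      (mul_le_mul' le_rfl hmass).trans (hmulti K)
    have hfin1 : 2 ^ (m + 1 + 1) * L ≠ ⊤ :=
      ENNReal.mul_ne_top (ENNReal.pow_ne_top ENNReal.ofNat_ne_top) hL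
    have hfin2 : ENNReal.ofReal (2 ^ K / (ν * h)) * (volume B *
        volume (Metric.ball (0 : EuclideanSpace ℝ (Fin (m + 1))) 1)) ≠ ⊤ :=
      ENNReal.mul_ne_top ENNReal.ofReal_ne_top (ENNReal.mul_ne_top hB_top hω_top)
    have h2 := ENNReal.toReal_mono (ENNReal.add_ne_top.2 ⟨hfin1, hfin2⟩) h1
    rw [ENNReal.toReal_add hfin1 hfin2] at h2
    simp only [ENNReal.toReal_mul, ENNReal.toReal_natCast, ENNReal.toReal_pow,
      ENNReal.toReal_ofNat] at h2
    rw [ENNReal.toReal_ofReal (by positivity), ENNReal.toReal_ofReal (by positivity), ← hω,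
      ← hb] at h2
    refine h2.trans (le_of_eq ?_)
    congr 1
    field_simp
    ring
  have key := log_le_of_multiscale (β := b / h ^ (m + 1)) hc₁0 hc₂0
    (by positivity : (0 : ℝ) < 2 ^ (m + 2)) (pow_pos hh m) (by positivity)
    ((div_le_one (by positivity)).2 hbQ) hbase' hmulti'
  rw [one_div_div] at key
  have hpow : (h ^ (m + 1)) ^ ((((m + 1 : ℕ) : ℝ) - 1) / ((m + 1 : ℕ) : ℝ)) = h ^ m := by
    rw [← Real.rpow_natCast h (m + 1), ← Real.rpow_mul hh.le,
      mul_div_cancel₀ _ (by positivity), ← Real.rpow_natCast h m]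
    push_cast
    ring_nf
  rw [hQr, hpow, ← hb]
  exact key
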